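/- arXiv:1910.00485 — 2 statements merged into one kernel-verified Lean document; each statement's English description precedes it below -/
import Mathlib

section
/- Let P be a finite poset with a(P) = m. For every n ≥ 1 there exists an injective map from hom_P(𝒫(n)) into [m]^[n], the set of ordered m-partitions of [n]; in particular, the number of poset homomorphisms from P to 𝒫(n) satisfies |hom_P(𝒫(n))| ≤ m^n. -/
open Classical in
/-- The finset of all antichains (including the empty antichain) of a finite poset `P`. -/
noncomputable def antichains (P : Type*) [Fintype P] [PartialOrder P] : Finset (Finset P) :=
  Finset.univ.filter (fun A => IsAntichain (· ≤ ·) (A : Set P))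

/-!
A monotone map `φ : P → 𝒫(X)` is determined by the sets `{p | x ∈ φ p}`, `x ∈ X`, which are
arbitrary upper sets of `P`. If `P` is well-founded, an upper set is the same thing as the antichain
of its minimal elements, so `φ` amounts to a labelling of `X` by antichains, and the fibres of this
labelling form an ordered partition of `X`. All these correspondences are bijective.
-/

theorem upperClosure_setOf_minimal {P : Type*} [PartialOrder P] [WellFoundedLT P]
    (U : UpperSet P) : upperClosure {p | Minimal (· ∈ U) p} = U := by
  ext p
  simp only [SetLike.mem_coe, mem_upperClosure, Set.mem_ofPred_eq]
  constructor
  · rintro ⟨q, hq, hqp⟩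
    exact U.upper hqp hq.prop
  · intro hp
    obtain ⟨q, hqp, hq⟩ := exists_minimal_le_of_wellFoundedLT (· ∈ U) p hp
    exact ⟨q, hq, hqp⟩

/-- The bijection between upper sets and antichains of a well-founded order, sending an upper set
to its minimal elements and an antichain to the upper set it generates. -/
def upperSetEquivAntichain (P : Type*) [PartialOrder P] [WellFoundedLT P] :
    UpperSet P ≃ {A : Set P // IsAntichain (· ≤ ·) A} where
  toFun U := ⟨{p | Minimal (· ∈ U) p}, setOfPred_minimal_antichain _⟩
  invFun A := upperClosure A.1
  left_inv := upperClosure_setOf_minimal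
  right_inv A := Subtype.ext <| Set.ext fun _ => A.2.minimal_mem_upperClosure_iff_mem

open Classical in
/-- The bijection between monotone set-valued maps on `P` and families of upper sets of `P`, sending
`φ` to the family `x ↦ {p | x ∈ φ p}`. -/
noncomputable def monotoneEquivUpperSet (P X : Type*) [Preorder P] [Fintype X] :
    {φ : P → Finset X // Monotone φ} ≃ (X → UpperSet P) where
  toFun φ x := ⟨{p | x ∈ φ.1 p}, fun _ _ hpq hx => φ.2 hpq hx⟩
  invFun U := ⟨fun p => {x | p ∈ U x}, fun _ _ hpq =>
    Finset.monotone_filter_right _ fun x _ hp => (U x).upper hpq hp⟩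
  left_inv φ := by ext; simp [← SetLike.mem_coe]
  right_inv U := by ext; simp [← SetLike.mem_coe]

section OrderedPartitions

/-- Ordered partitions of `X` with parts indexed by `ι`, empty parts being allowed; for `ι = Fin m`
and `X = Fin n` these are the elements of `[m]^[n]`. -/
abbrev OrderedPartition (ι X : Type*) : Type _ :=
  {A : ι → Finset X // (∀ i j, i ≠ j → Disjoint (A i) (A j)) ∧ ∀ x, ∃ i, x ∈ A i}

variable {ι X : Type*}

theorem OrderedPartition.eq_of_mem (A : OrderedPartition ι X) {x : X} {i j : ι}
    (hi : x ∈ A.1 i) (hj : x ∈ A.1 j) : i = j :=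
  by_contra fun hij => Finset.disjoint_left.mp (A.2.1 i j hij) hi hj

variable (ι X)

open Classical in
/-- The bijection between labellings of `X` by `ι` and ordered partitions, sending a labelling to
its fibres. -/
noncomputable def labellingEquivOrderedPartition [Fintype X] :
    (X → ι) ≃ OrderedPartition ι X where
  toFun f := ⟨fun i => {x | f x = i}, fun i j hij => Finset.disjoint_filter.mpr fun _ _ hi hj =>
    hij (hi.symm.trans hj), fun x => ⟨f x, by simp⟩⟩
  invFun A x := (A.2.2 x).choose
  left_inv f := by simp
  right_inv A := by
    ext i x
    have hx : x ∈ A.1 (A.2.2 x).choose := (A.2.2 x).choose_spec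
    simp only [Finset.mem_filter_univ]
    exact ⟨fun h => h ▸ hx, A.eq_of_mem hx⟩

theorem card_orderedPartition [Finite X] :
    Nat.card (OrderedPartition ι X) = Nat.card ι ^ Nat.card X := by
  cases nonempty_fintype X
  rw [← Nat.card_congr (labellingEquivOrderedPartition ι X), Nat.card_fun]

end OrderedPartitions

/-- Identifies the antichains listed in `antichains P`, which are finsets, with antichains as
sets. -/
noncomputable def antichainsEquiv (P : Type*) [Fintype P] [PartialOrder P] :
    antichains P ≃ {A : Set P // IsAntichain (· ≤ ·) A} :=
  Fintype.finsetEquivSet.subtypeEquiv fun A => by simp [antichains]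

theorem stmt2_general {P ι : Type*} [PartialOrder P] [WellFoundedLT P]
    (e : ι ≃ {A : Set P // IsAntichain (· ≤ ·) A}) (X : Type*) [Finite X] :
    Nonempty ({φ : P → Finset X // Monotone φ} ≃ OrderedPartition ι X) := by
  cases nonempty_fintype X
  exact ⟨(monotoneEquivUpperSet P X).trans <|
    (Equiv.piCongrRight fun _ => (upperSetEquivAntichain P).trans e.symm).trans <|
      labellingEquivOrderedPartition ι X⟩

/-- Let `P` be a finite poset with `a(P) = m` antichains. For every `n ≥ 1` there is an
injection from the set `hom_P(𝒫(n))` of poset homomorphisms (monotone maps) from `P` to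
`𝒫(n)` (modelled as `Finset (Fin n)` ordered by inclusion) into the set `[m]^[n]` of ordered
`m`-partitions of `[n]` (indexed tuples of pairwise disjoint, possibly empty, subsets of
`[n]` covering `[n]`); in particular `|hom_P(𝒫(n))| ≤ m ^ n`. -/
theorem stmt2 (P : Type) [Fintype P] [PartialOrder P] (n : ℕ) (hn : 1 ≤ n) :
    (∃ f : {φ : P → Finset (Fin n) // Monotone φ} →
        {A : Fin ((antichains P).card) → Finset (Fin n) //
          (∀ i j, i ≠ j → Disjoint (A i) (A j)) ∧ ∀ x : Fin n, ∃ i, x ∈ A i},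
      Function.Injective f) ∧
    Nat.card {φ : P → Finset (Fin n) // Monotone φ} ≤ (antichains P).card ^ n := by
  obtain ⟨e⟩ := stmt2_general ((antichains P).equivFin.symm.trans (antichainsEquiv P)) (Fin n)
  exact ⟨⟨e, e.injective⟩, by
    rw [Nat.card_congr e, card_orderedPartition, Nat.card_fin, Nat.card_fin]⟩
end

section
/- Let P be a finite nonempty poset and let c > c_⋆(P) be a fixed real number. Set p = p(n) = e^{−c·n}. Then with high probability P is not a subposet of the random poset (𝒫(n,p), ⊆); that is, the probability that there exists an injective poset homomorphism from P into the poset of elements of 𝒫(n,p) ordered by inclusion tends to 0 as n → ∞. -/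
/-- The upper shadow `∂_Q S` of an antichain `S` of `P` inside a subset `Q ⊆ P`. -/
def upperShadow {P : Type*} [PartialOrder P] (Q : Set P) (S : Set P) : Set P :=
  {y | y ∈ Q ∧ (∃ x ∈ S, x ≤ y) ∧ ∀ z ∈ Q, z < y → ∀ x ∈ S, ¬ x ≤ z}

open Classical in
/-- The antichains of the subposet `Q ⊆ P`, i.e. antichains of `P` contained in `Q`. -/
noncomputable def antichainsIn {P : Type*} [Fintype P] [PartialOrder P] (Q : Set P) :
    Finset (Finset P) :=
  (antichains P).filter (fun A => (A : Set P) ⊆ Q)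

/-- A weighting `α ∈ Δ_{a(P)}`: a nonnegative function on the antichains of `P`
(extended by `0` off the antichains) summing to `1`. -/
def IsWeighting {P : Type*} [Fintype P] [PartialOrder P] (α : Finset P → ℝ) : Prop :=
  (∀ A ∈ antichains P, 0 ≤ α A) ∧ (∀ A ∉ antichains P, α A = 0) ∧
    ∑ A ∈ antichains P, α A = 1

open Classical in
/-- The shadow weighting `∂_Q(α)`: the coordinate of `∂_Q(α)` at an antichain `T` of `Q`
is the sum of `α` over all antichains of `P` whose upper shadow in `Q` is `T`. -/
noncomputable def shadowWeight {P : Type*} [Fintype P] [PartialOrder P]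
    (α : Finset P → ℝ) (Q : Set P) (T : Finset P) : ℝ :=
  ∑ A ∈ (antichains P).filter (fun B : Finset P => upperShadow Q (B : Set P) = (T : Set P)), α A

/-- The critical exponent `c_{α,P}(Q) = H_{a(Q)}(∂_Q(α)) / |Q|` of a subposet `Q` of `P`
with respect to a weighting `α` (natural logarithm; `0 log 0 = 0`). -/
noncomputable def critExp {P : Type*} [Fintype P] [PartialOrder P]
    (α : Finset P → ℝ) (Q : Set P) : ℝ :=
  (∑ T ∈ antichainsIn Q, -(shadowWeight α Q T * Real.log (shadowWeight α Q T))) /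
    (Q.ncard : ℝ)

/-- The critical exponent `c_⋆(P) = max_{α ∈ Δ_{a(P)}} min_{∅ ≠ Q ⊆ P} c_{α,P}(Q)`,
expressed as `sup {c ≥ 0 : ∃ α ∈ Δ_{a(P)}, ∀ ∅ ≠ Q ⊆ P, c ≤ c_{α,P}(Q)}`. -/
noncomputable def critStar (P : Type*) [Fintype P] [PartialOrder P] : ℝ :=
  sSup {c : ℝ | 0 ≤ c ∧ ∃ α : Finset P → ℝ, IsWeighting α ∧
    ∀ Q : Set P, Q.Nonempty → c ≤ critExp α Q}

open Classical in
/-- The probability, under the product of Bernoulli(`p`) measures on `{0,1}^{𝒫(n)}`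
(each element of `𝒫(n)` retained independently with probability `p`), of an event `E`. -/
noncomputable def cubeProb (n : ℕ) (p : ℝ) (E : Set (Finset (Fin n) → Bool)) : ℝ :=
  ∑ ω ∈ Finset.univ.filter (fun ω : Finset (Fin n) → Bool => ω ∈ E),
    ∏ X : Finset (Fin n), (if ω X = true then p else 1 - p)

/-! If `P` embeds in `𝒫(n, p)` via `φ`, each coordinate `i ∈ [n]` determines the antichain of
minimal `x` with `i ∈ φ x`; let `α` be the empirical distribution of these `n` antichains. As
`c' > c_⋆(P)`, some nonempty `Q` has `c_{α,P}(Q) < c'`. The restriction of `φ` to `Q` can be read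
off from the upper shadows in `Q` of the `n` antichains, whose empirical distribution has entropy
less than `c' |Q|`; the method of types therefore leaves only `n^{O(1)} e^{c' |Q| n}` candidates
for `φ(Q)`. Each is retained with probability `p^{|Q|}`, so for `c' < c` the expected number of
retained candidates, summed over `Q`, is at most `n^{O(1)} e^{-(c - c') n}`. -/

open Finset Filter
open scoped Topology

section MethodOfTypes

variable {ι T : Type*} [Fintype ι]

open scoped Classical in
/-- The empirical distribution (the *type*) of a word `g : ι → T`: the proportion of positions
carrying each letter. It is the zero function when `ι` is empty. -/
noncomputable def empiricalDist (g : ι → T) (t : T) : ℝ :=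
  #{i | g i = t} / Fintype.card ι

/-- The Shannon entropy `H(b) = ∑ t, -b t log (b t)` of a weight function on a finite type, in
nats. -/
noncomputable def shannonEntropy [Fintype T] (b : T → ℝ) : ℝ :=
  ∑ t, Real.negMulLog (b t)

lemma empiricalDist_nonneg (g : ι → T) (t : T) : 0 ≤ empiricalDist g t := by
  unfold empiricalDist
  positivity

lemma empiricalDist_apply_pos (g : ι → T) (i : ι) : 0 < empiricalDist g (g i) := by
  classical
  have : Nonempty ι := ⟨i⟩
  have : 0 < #{j | g j = g i} := card_pos.2 ⟨i, by simp⟩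
  unfold empiricalDist
  positivity

lemma empiricalDist_eq_zero {g : ι → T} {t : T} (h : ∀ i, g i ≠ t) : empiricalDist g t = 0 := by
  simp [empiricalDist, h]

open scoped Classical in
lemma card_mul_empiricalDist (g : ι → T) (t : T) :
    Fintype.card ι * empiricalDist g t = #{i | g i = t} := by
  rcases isEmpty_or_nonempty ι
  · simp
  · exact mul_div_cancel₀ _ (by positivity)

lemma sum_empiricalDist_of_mem [Nonempty ι] {g : ι → T} {s : Finset T} (h : ∀ i, g i ∈ s) :
    ∑ t ∈ s, empiricalDist g t = 1 := by
  classical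
  have hfib : #(univ : Finset ι) = ∑ t ∈ s, #{i | g i = t} :=
    card_eq_sum_card_fiberwise fun i _ => h i
  simp only [empiricalDist, ← sum_div, ← Nat.cast_sum, ← hfib, card_univ]
  exact div_self (by positivity)

open scoped Classical in
lemma sum_filter_empiricalDist {U : Type*} {g : ι → T} {s : Finset T} (hg : ∀ i, g i ∈ s)
    (h : T → U) (u : U) :
    ∑ t ∈ s with h t = u, empiricalDist g t = empiricalDist (fun i => h (g i)) u := by
  simp only [empiricalDist, ← sum_div, ← Nat.cast_sum]
  rw [sum_card_fiberwise_eq_card_filter univ {t ∈ s | h t = u} g]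
  simp only [mem_filter, hg, true_and]

variable [Fintype T]

lemma prod_empiricalDist (g : ι → T) :
    ∏ i, empiricalDist g (g i) =
      Real.exp (-(Fintype.card ι * shannonEntropy (empiricalDist g))) := by
  classical
  have hlog : ∑ i, Real.log (empiricalDist g (g i)) =
      -(Fintype.card ι * shannonEntropy (empiricalDist g)) := by
    rw [← sum_fiberwise' univ g (fun t => Real.log (empiricalDist g t)), shannonEntropy, mul_sum,
      ← sum_neg_distrib]
    refine sum_congr rfl fun t _ => ?_
    rw [sum_const, nsmul_eq_mul, ← card_mul_empiricalDist, Real.negMulLog]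
    ring
  rw [← hlog, Real.exp_sum]
  exact prod_congr rfl fun i _ => (Real.exp_log (empiricalDist_apply_pos g i)).symm

open scoped Classical in
lemma card_filter_empiricalDist_eq_le [Nonempty ι] (g : ι → T) :
    (#{f : ι → T | empiricalDist f = empiricalDist g} : ℝ) ≤
      Real.exp (Fintype.card ι * shannonEntropy (empiricalDist g)) := by
  -- A word drawn i.i.d. from `empiricalDist g` takes each value of that type with probability
  -- `exp (-|ι| H)`, so there are at most `exp (|ι| H)` of them.
  suffices #{f : ι → T | empiricalDist f = empiricalDist g} *
      Real.exp (-(Fintype.card ι * shannonEntropy (empiricalDist g))) ≤ 1 by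
    rwa [Real.exp_neg, ← div_eq_mul_inv, div_le_one (Real.exp_pos _)] at this
  calc #{f : ι → T | empiricalDist f = empiricalDist g} *
        Real.exp (-(Fintype.card ι * shannonEntropy (empiricalDist g)))
      = ∑ f : ι → T with empiricalDist f = empiricalDist g, ∏ i, empiricalDist g (f i) := by
        rw [← nsmul_eq_mul, ← sum_const]
        refine sum_congr rfl fun f hf => ?_
        rw [← (mem_filter.1 hf).2, prod_empiricalDist]
    _ ≤ ∑ f : ι → T, ∏ i, empiricalDist g (f i) :=
        sum_le_sum_of_subset_of_nonneg (subset_univ _) fun f _ _ =>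
          prod_nonneg fun i _ => empiricalDist_nonneg _ _
    _ = ∏ _i : ι, ∑ t, empiricalDist g t := by
        rw [← sum_prod_piFinset, Fintype.piFinset_univ]
    _ = 1 := by simp [sum_empiricalDist_of_mem (s := univ) (g := g)]

open scoped Classical in
lemma card_image_empiricalDist_le (s : Finset (ι → T)) :
    #(s.image empiricalDist) ≤ (Fintype.card ι + 1) ^ Fintype.card T := by
  have hsub : s.image empiricalDist ⊆
      (Fintype.piFinset fun _ : T => range (Fintype.card ι + 1)).image
        fun k t => (k t : ℝ) / Fintype.card ι := by
    refine image_subset_iff.2 fun g _ => mem_image.2 ⟨fun t => #{i | g i = t}, ?_, rfl⟩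
    exact Fintype.mem_piFinset.2 fun t => mem_range_succ_iff.2 (card_le_univ _)
  simpa using (card_le_card hsub).trans card_image_le

theorem card_le_of_shannonEntropy_empiricalDist_le [Nonempty ι] {s : Finset (ι → T)} {h : ℝ}
    (hs : ∀ g ∈ s, shannonEntropy (empiricalDist g) ≤ h) :
    (#s : ℝ) ≤ (Fintype.card ι + 1 : ℝ) ^ Fintype.card T * Real.exp (Fintype.card ι * h) := by
  classical
  have hfiber : ∀ b ∈ s.image empiricalDist,
      (#{g ∈ s | empiricalDist g = b} : ℝ) ≤ Real.exp (Fintype.card ι * h) := by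
    intro b hb
    obtain ⟨g, hg, rfl⟩ := mem_image.1 hb
    calc (#{f ∈ s | empiricalDist f = empiricalDist g} : ℝ)
        ≤ #{f : ι → T | empiricalDist f = empiricalDist g} := by gcongr; exact subset_univ s
      _ ≤ Real.exp (Fintype.card ι * shannonEntropy (empiricalDist g)) :=
          card_filter_empiricalDist_eq_le g
      _ ≤ Real.exp (Fintype.card ι * h) := by gcongr; exact hs g hg
  calc (#s : ℝ) = ∑ b ∈ s.image empiricalDist, (#{g ∈ s | empiricalDist g = b} : ℝ) := by
        rw [card_eq_sum_card_image empiricalDist s, Nat.cast_sum]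
    _ ≤ #(s.image empiricalDist) * Real.exp (Fintype.card ι * h) := by
        rw [← nsmul_eq_mul]
        exact sum_le_card_nsmul _ _ _ hfiber
    _ ≤ (Fintype.card ι + 1 : ℝ) ^ Fintype.card T * Real.exp (Fintype.card ι * h) := by
        gcongr
        exact_mod_cast card_image_empiricalDist_le s

end MethodOfTypes

section CubeProb

variable {n : ℕ} {p : ℝ}

lemma prod_bernoulli_nonneg (h0 : 0 ≤ p) (h1 : p ≤ 1) (ω : Finset (Fin n) → Bool) :
    0 ≤ ∏ X, (if ω X = true then p else 1 - p) :=
  prod_nonneg fun X _ => by split_ifs <;> linarith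

lemma cubeProb_nonneg (h0 : 0 ≤ p) (h1 : p ≤ 1) (E : Set (Finset (Fin n) → Bool)) :
    0 ≤ cubeProb n p E :=
  sum_nonneg fun ω _ => prod_bernoulli_nonneg h0 h1 ω

lemma cubeProb_le_sum (h0 : 0 ≤ p) (h1 : p ≤ 1) {κ : Type*} {s : Finset κ}
    {E : Set (Finset (Fin n) → Bool)} {F : κ → Set (Finset (Fin n) → Bool)}
    (hE : ∀ ω ∈ E, ∃ k ∈ s, ω ∈ F k) : cubeProb n p E ≤ ∑ k ∈ s, cubeProb n p (F k) := by
  classical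
  simp only [cubeProb, sum_filter]
  rw [sum_comm]
  refine sum_le_sum fun ω _ => ?_
  have hterm : ∀ k ∈ s, 0 ≤ if ω ∈ F k then ∏ X, (if ω X = true then p else 1 - p) else 0 :=
    fun k _ => ite_nonneg (prod_bernoulli_nonneg h0 h1 ω) le_rfl
  by_cases hω : ω ∈ E
  · obtain ⟨k, hk, hkF⟩ := hE ω hω
    simpa only [hω, hkF, if_true] using single_le_sum hterm hk
  · simpa only [hω, if_false] using sum_nonneg hterm

lemma cubeProb_forall_mem_eq_true (p : ℝ) (S : Finset (Finset (Fin n))) :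
    cubeProb n p {ω | ∀ X ∈ S, ω X = true} = p ^ #S := by
  classical
  have hcyl : univ.filter (· ∈ {ω : Finset (Fin n) → Bool | ∀ X ∈ S, ω X = true}) =
      Fintype.piFinset fun X => if X ∈ S then {true} else univ := by
    ext ω
    simp only [mem_filter_univ, Set.mem_ofPred_eq, Fintype.mem_piFinset]
    exact forall_congr' fun X => by by_cases h : X ∈ S <;> simp [h]
  have hmarginal : ∀ X, ∑ b ∈ (if X ∈ S then {true} else univ), (if b = true then p else 1 - p) =
      if X ∈ S then p else 1 := by
    intro X
    by_cases h : X ∈ S <;> simp [h]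
  calc cubeProb n p {ω | ∀ X ∈ S, ω X = true}
      = ∑ ω ∈ Fintype.piFinset fun X => if X ∈ S then {true} else univ,
          ∏ X, (if ω X = true then p else 1 - p) := by
        unfold cubeProb
        exact sum_congr (by convert hcyl) fun _ _ => rfl
    _ = ∏ X, ∑ b ∈ (if X ∈ S then {true} else univ), (if b = true then p else 1 - p) :=
        (prod_univ_sum (fun X => if X ∈ S then {true} else univ) fun _ b =>
          if b = true then p else 1 - p).symm
    _ = p ^ #S := by
        simp only [hmarginal]
        rw [prod_ite_mem, univ_inter, prod_const]

lemma cubeProb_exists_forall_mem_le (h0 : 0 ≤ p) (h1 : p ≤ 1)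
    {𝒮 : Finset (Finset (Finset (Fin n)))} {m : ℕ} (h𝒮 : ∀ S ∈ 𝒮, #S = m) :
    cubeProb n p {ω | ∃ S ∈ 𝒮, ∀ X ∈ S, ω X = true} ≤ #𝒮 * p ^ m := by
  calc cubeProb n p {ω | ∃ S ∈ 𝒮, ∀ X ∈ S, ω X = true}
      ≤ ∑ S ∈ 𝒮, cubeProb n p {ω | ∀ X ∈ S, ω X = true} :=
        cubeProb_le_sum h0 h1 fun _ hω => hω
    _ = ∑ _S ∈ 𝒮, p ^ m :=
        sum_congr rfl fun S hS => (cubeProb_forall_mem_eq_true p S).trans (by rw [h𝒮 S hS])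
    _ = #𝒮 * p ^ m := by rw [sum_const, nsmul_eq_mul]

end CubeProb

section UpperShadow

open scoped Classical in
/-- The map from `P` to the subsets of `ι` encoded by a word `g` of antichains: `i` belongs to the
value at `x` when `x` lies above a member of `g i`. -/
noncomputable def mapOfAntichains {P ι : Type*} [LE P] [Fintype ι] (g : ι → Finset P) (x : P) :
    Finset ι :=
  {i | ∃ y ∈ g i, y ≤ x}

variable {P ι : Type*} [PartialOrder P]

lemma mem_upperShadow_iff_minimal {Q S : Set P} {y : P} :
    y ∈ upperShadow Q S ↔ Minimal (fun z => z ∈ Q ∧ ∃ x ∈ S, x ≤ z) y := by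
  rw [minimal_iff_forall_lt]
  simp only [upperShadow, Set.mem_ofPred_eq]
  grind

lemma isAntichain_upperShadow (Q S : Set P) : IsAntichain (· ≤ ·) (upperShadow Q S) := by
  have : upperShadow Q S = {y | Minimal (fun z => z ∈ Q ∧ ∃ x ∈ S, x ≤ z) y} :=
    Set.ext fun _ => mem_upperShadow_iff_minimal
  exact this ▸ setOfPred_minimal_antichain _

lemma exists_mem_upperShadow_le_iff [WellFoundedLT P] {Q S : Set P} {x : P} (hx : x ∈ Q) :
    (∃ y ∈ upperShadow Q S, y ≤ x) ↔ ∃ a ∈ S, a ≤ x := by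
  constructor
  · rintro ⟨y, ⟨-, ⟨a, ha, hay⟩, -⟩, hyx⟩
    exact ⟨a, ha, hay.trans hyx⟩
  · intro hax
    obtain ⟨y, hyx, hy⟩ := exists_minimal_le_of_wellFoundedLT
      (fun z => z ∈ Q ∧ ∃ a ∈ S, a ≤ z) x ⟨hx, hax⟩
    exact ⟨y, mem_upperShadow_iff_minimal.2 hy, hyx⟩

variable [Fintype P]

open scoped Classical in
/-- The upper shadow `∂_Q A` of an antichain, as a finset. -/
noncomputable def shadowFinset (Q A : Finset P) : Finset P := {y | y ∈ upperShadow Q A}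

lemma coe_shadowFinset (Q A : Finset P) : (shadowFinset Q A : Set P) = upperShadow Q A := by
  simp [shadowFinset]

lemma shadowFinset_mem_antichainsIn (Q A : Finset P) :
    shadowFinset Q A ∈ antichainsIn (Q : Set P) := by
  simp only [antichainsIn, antichains, mem_filter, mem_univ, true_and, coe_shadowFinset]
  exact ⟨isAntichain_upperShadow _ _, fun y hy => hy.1⟩

open scoped Classical in
/-- The antichain of minimal elements of `{x | i ∈ φ x}`: the `i`-th letter of the word encoding a
map `φ` from `P` to the Boolean lattice of subsets of `ι`. -/
noncomputable def coordAntichain (φ : P → Finset ι) (i : ι) : Finset P :=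
  {x | Minimal (fun y => i ∈ φ y) x}

lemma coordAntichain_mem_antichains (φ : P → Finset ι) (i : ι) :
    coordAntichain φ i ∈ antichains P := by
  simpa [antichains, coordAntichain] using setOfPred_minimal_antichain (fun y => i ∈ φ y)

lemma exists_mem_coordAntichain_le_iff {φ : P → Finset ι} (hφ : Monotone φ) {i : ι} {x : P} :
    (∃ a ∈ coordAntichain φ i, a ≤ x) ↔ i ∈ φ x := by
  simp only [coordAntichain, mem_filter_univ]
  constructor
  · rintro ⟨a, ha, hax⟩
    exact hφ hax ha.prop
  · intro hi
    obtain ⟨a, hax, ha⟩ := exists_minimal_le_of_wellFoundedLT (fun y => i ∈ φ y) x hi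
    exact ⟨a, ha, hax⟩

lemma mapOfAntichains_shadowFinset_coordAntichain [Fintype ι] {φ : P → Finset ι} (hφ : Monotone φ)
    {Q : Finset P} {x : P} (hx : x ∈ Q) :
    mapOfAntichains (fun i => shadowFinset Q (coordAntichain φ i)) x = φ x := by
  ext i
  simp only [mapOfAntichains, mem_filter_univ, ← mem_coe (s := shadowFinset _ _), coe_shadowFinset]
  rw [exists_mem_upperShadow_le_iff (mem_coe.2 hx)]
  exact exists_mem_coordAntichain_le_iff hφ

end UpperShadow

section CriticalExponent

variable {P ι : Type*} [Fintype P] [PartialOrder P]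

lemma isWeighting_empiricalDist [Fintype ι] [Nonempty ι] {f : ι → Finset P}
    (hf : ∀ i, f i ∈ antichains P) : IsWeighting (empiricalDist f) :=
  ⟨fun A _ => empiricalDist_nonneg f A,
    fun _ hA => empiricalDist_eq_zero fun i hi => hA (hi ▸ hf i), sum_empiricalDist_of_mem hf⟩

lemma shadowWeight_empiricalDist [Fintype ι] {f : ι → Finset P} (hf : ∀ i, f i ∈ antichains P)
    (Q T : Finset P) :
    shadowWeight (empiricalDist f) Q T = empiricalDist (fun i => shadowFinset Q (f i)) T := by
  have hshadow : ∀ A : Finset P, upperShadow (Q : Set P) A = T ↔ shadowFinset Q A = T :=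
    fun A => by rw [← coe_shadowFinset, coe_inj]
  rw [← sum_filter_empiricalDist hf (shadowFinset Q) T]
  exact sum_congr (by ext A; simp only [mem_filter, hshadow]) fun _ _ => rfl

lemma critExp_empiricalDist [Fintype ι] {f : ι → Finset P} (hf : ∀ i, f i ∈ antichains P)
    (Q : Finset P) :
    critExp (empiricalDist f) Q =
      shannonEntropy (empiricalDist fun i => shadowFinset Q (f i)) / #Q := by
  have hzero : ∀ T ∉ antichainsIn (Q : Set P),
      empiricalDist (fun i => shadowFinset Q (f i)) T = 0 :=
    fun T hT => empiricalDist_eq_zero fun i hi => hT (hi ▸ shadowFinset_mem_antichainsIn Q (f i))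
  simp only [critExp, shadowWeight_empiricalDist hf, shannonEntropy, Real.negMulLog_eq_neg,
    Set.ncard_coe_finset]
  congr 1
  exact sum_subset (subset_univ _) fun T _ hT => by simp [hzero T hT]

lemma shadowWeight_nonneg {α : Finset P → ℝ} (hα : IsWeighting α) (Q : Set P) (T : Finset P) :
    0 ≤ shadowWeight α Q T :=
  sum_nonneg fun A hA => hα.1 A (mem_filter.1 hA).1

lemma critExp_le {α : Finset P → ℝ} (hα : IsWeighting α) (Q : Set P) :
    critExp α Q ≤ #(antichainsIn Q) / Q.ncard := by
  have hterm : ∀ T ∈ antichainsIn Q,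
      -(shadowWeight α Q T * Real.log (shadowWeight α Q T)) ≤ 1 := by
    intro T _
    have hw := shadowWeight_nonneg hα Q T
    have := Real.negMulLog_le_one_sub_self hw
    rw [Real.negMulLog_eq_neg] at this
    linarith
  have := sum_le_card_nsmul _ _ _ hterm
  rw [nsmul_one] at this
  unfold critExp
  gcongr

lemma critStar_nonneg : 0 ≤ critStar P := Real.sSup_nonneg fun _ h => h.1

lemma exists_critExp_lt [Nonempty P] {c : ℝ} (hc : critStar P < c) {α : Finset P → ℝ}
    (hα : IsWeighting α) : ∃ Q : Finset P, Q.Nonempty ∧ critExp α Q < c := by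
  classical
  by_contra! hge
  have hbdd : BddAbove {c : ℝ | 0 ≤ c ∧ ∃ α : Finset P → ℝ, IsWeighting α ∧
      ∀ Q : Set P, Q.Nonempty → c ≤ critExp α Q} :=
    ⟨_, fun _ ⟨_, _, hβ, h⟩ => (h Set.univ Set.univ_nonempty).trans (critExp_le hβ Set.univ)⟩
  refine hc.not_ge (le_csSup hbdd ⟨critStar_nonneg.trans hc.le, α, hα, fun Q hQ => ?_⟩)
  simpa using hge Q.toFinset (Set.toFinset_nonempty.2 hQ)

end CriticalExponent

section Copies

variable {P ι : Type*} [Fintype P] [PartialOrder P] [Fintype ι]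

open scoped Classical in
/-- The images `φ(Q)` of the monotone injections `φ` from `P` to the subsets of `ι` for which the
critical exponent of `Q`, with respect to the empirical distribution of the antichains encoding `φ`,
is less than `c`. -/
noncomputable def lowExponentImages (ι : Type*) [Fintype ι] (c : ℝ) (Q : Finset P) :
    Finset (Finset (Finset ι)) :=
  ({φ : P → Finset ι | φ.Injective ∧ Monotone φ ∧
    critExp (empiricalDist (coordAntichain φ)) Q < c} : Finset (P → Finset ι)).image Q.image

lemma card_of_mem_lowExponentImages {c : ℝ} {Q : Finset P} {S : Finset (Finset ι)}
    (hS : S ∈ lowExponentImages ι c Q) : #S = #Q := by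
  classical
  simp only [lowExponentImages, mem_image, mem_filter_univ] at hS
  obtain ⟨φ, ⟨hinj, -, -⟩, rfl⟩ := hS
  exact card_image_of_injective Q hinj

lemma card_lowExponentImages_le [Nonempty ι] (c : ℝ) {Q : Finset P} (hQ : Q.Nonempty) :
    (#(lowExponentImages ι c Q) : ℝ) ≤
      (Fintype.card ι + 1 : ℝ) ^ 2 ^ Fintype.card P * Real.exp (c * Fintype.card ι) ^ #Q := by
  classical
  let words : Finset (ι → Finset P) := {g | shannonEntropy (empiricalDist g) ≤ c * #Q}
  have hsub : lowExponentImages ι c Q ⊆ words.image fun g => Q.image (mapOfAntichains g) := by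
    refine image_subset_iff.2 fun φ hφ => mem_image.2
      ⟨fun i => shadowFinset Q (coordAntichain φ i), ?_, ?_⟩
    · have hlt := ((mem_filter_univ _).1 hφ).2.2
      rw [critExp_empiricalDist (coordAntichain_mem_antichains φ),
        div_lt_iff₀ (by exact_mod_cast hQ.card_pos)] at hlt
      exact (mem_filter_univ _).2 hlt.le
    · have hmono := ((mem_filter_univ _).1 hφ).2.1
      exact image_congr fun x hx => mapOfAntichains_shadowFinset_coordAntichain hmono hx
  calc (#(lowExponentImages ι c Q) : ℝ) ≤ #words := by
        exact_mod_cast (card_le_card hsub).trans card_image_le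
    _ ≤ (Fintype.card ι + 1 : ℝ) ^ Fintype.card (Finset P) *
          Real.exp (Fintype.card ι * (c * #Q)) :=
        card_le_of_shannonEntropy_empiricalDist_le fun g hg => (mem_filter_univ g).1 hg
    _ = (Fintype.card ι + 1 : ℝ) ^ 2 ^ Fintype.card P * Real.exp (c * Fintype.card ι) ^ #Q := by
        rw [Fintype.card_finset, ← Real.exp_nat_mul]
        congr 2
        ring

lemma exists_mem_lowExponentImages_subset_range [Nonempty P] [Nonempty ι] {c : ℝ}
    (hc : critStar P < c) {φ : P → Finset ι} (hinj : φ.Injective) (hmono : Monotone φ) :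
    ∃ Q : Finset P, Q.Nonempty ∧
      ∃ S ∈ lowExponentImages ι c Q, ∀ X ∈ S, X ∈ Set.range φ := by
  classical
  obtain ⟨Q, hQ, hlt⟩ :=
    exists_critExp_lt hc (isWeighting_empiricalDist (coordAntichain_mem_antichains φ))
  exact ⟨Q, hQ, _, mem_image_of_mem _ ((mem_filter_univ φ).2 ⟨hinj, hmono, hlt⟩),
    forall_mem_image.2 fun x _ => ⟨x, rfl⟩⟩

lemma cubeProb_exists_mem_lowExponentImages_le {c p : ℝ} {n : ℕ} (hn : 0 < n) (hp0 : 0 ≤ p)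
    (hp1 : p ≤ 1) (hcp : Real.exp (c * n) * p ≤ 1) {Q : Finset P} (hQ : Q.Nonempty) :
    cubeProb n p {ω | ∃ S ∈ lowExponentImages (Fin n) c Q, ∀ X ∈ S, ω X = true} ≤
      (n + 1 : ℝ) ^ 2 ^ Fintype.card P * (Real.exp (c * n) * p) := by
  have : Nonempty (Fin n) := Fin.pos_iff_nonempty.1 hn
  have hcard := card_lowExponentImages_le (ι := Fin n) c hQ
  rw [Fintype.card_fin] at hcard
  calc cubeProb n p {ω | ∃ S ∈ lowExponentImages (Fin n) c Q, ∀ X ∈ S, ω X = true}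
      ≤ #(lowExponentImages (Fin n) c Q) * p ^ #Q :=
        cubeProb_exists_forall_mem_le hp0 hp1 fun S hS => card_of_mem_lowExponentImages hS
    _ ≤ ((n + 1 : ℝ) ^ 2 ^ Fintype.card P * Real.exp (c * n) ^ #Q) * p ^ #Q := by gcongr
    _ = (n + 1 : ℝ) ^ 2 ^ Fintype.card P * (Real.exp (c * n) * p) ^ #Q := by ring
    _ ≤ (n + 1 : ℝ) ^ 2 ^ Fintype.card P * (Real.exp (c * n) * p) := by
        gcongr
        exact pow_le_of_le_one (by positivity) hcp hQ.card_pos.ne'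

theorem cubeProb_exists_copy_le [Nonempty P] {c p : ℝ} {n : ℕ} (hc : critStar P < c) (hn : 0 < n)
    (hp : 0 ≤ p) (hcp : Real.exp (c * n) * p ≤ 1) :
    cubeProb n p {ω | ∃ φ : P → Finset (Fin n), φ.Injective ∧ Monotone φ ∧ ∀ x, ω (φ x) = true} ≤
      2 ^ Fintype.card P * ((n + 1 : ℝ) ^ 2 ^ Fintype.card P * (Real.exp (c * n) * p)) := by
  classical
  have : Nonempty (Fin n) := Fin.pos_iff_nonempty.1 hn
  have hc0 : 0 ≤ c := critStar_nonneg.trans hc.le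
  have hp1 : p ≤ 1 :=
    (le_mul_of_one_le_left hp (Real.one_le_exp (by positivity))).trans hcp
  calc cubeProb n p {ω | ∃ φ : P → Finset (Fin n), φ.Injective ∧ Monotone φ ∧ ∀ x, ω (φ x) = true}
      ≤ ∑ Q : Finset P with Q.Nonempty,
          cubeProb n p {ω | ∃ S ∈ lowExponentImages (Fin n) c Q, ∀ X ∈ S, ω X = true} := by
        refine cubeProb_le_sum hp hp1 ?_
        rintro ω ⟨φ, hinj, hmono, hω⟩
        obtain ⟨Q, hQ, S, hS, hSφ⟩ := exists_mem_lowExponentImages_subset_range hc hinj hmono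
        refine ⟨Q, (mem_filter_univ Q).2 hQ, S, hS, fun X hX => ?_⟩
        obtain ⟨x, rfl⟩ := hSφ X hX
        exact hω x
    _ ≤ #{Q : Finset P | Q.Nonempty} *
          ((n + 1 : ℝ) ^ 2 ^ Fintype.card P * (Real.exp (c * n) * p)) := by
        rw [← nsmul_eq_mul]
        exact sum_le_card_nsmul _ _ _ fun Q hQ =>
          cubeProb_exists_mem_lowExponentImages_le hn hp hp1 hcp ((mem_filter_univ Q).1 hQ)
    _ ≤ 2 ^ Fintype.card P * ((n + 1 : ℝ) ^ 2 ^ Fintype.card P * (Real.exp (c * n) * p)) := by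
        gcongr
        exact_mod_cast (card_le_univ _).trans_eq Fintype.card_finset

end Copies

lemma tendsto_add_one_pow_mul_exp_neg_mul_atTop_nhds_zero (k : ℕ) {d : ℝ} (hd : 0 < d) :
    Tendsto (fun n : ℕ => (n + 1 : ℝ) ^ k * Real.exp (-(d * n))) atTop (𝓝 0) := by
  have hgeom : Tendsto (fun n : ℕ => (n : ℝ) ^ k * Real.exp (-d) ^ n) atTop (𝓝 0) :=
    tendsto_pow_const_mul_const_pow_of_lt_one k (Real.exp_pos _).le
      (Real.exp_lt_one_iff.2 (neg_lt_zero.2 hd))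
  have hshift := ((tendsto_add_atTop_iff_nat 1).2 hgeom).mul_const (Real.exp d)
  rw [zero_mul] at hshift
  refine hshift.congr fun n => ?_
  rw [← Real.exp_nat_mul, mul_assoc, ← Real.exp_add]
  push_cast
  ring_nf

/-- 0-statement of the existence threshold: if `c > c_⋆(P)` and `p = e^{-cn}`, then w.h.p.
the random poset `𝒫(n,p)` contains no copy of `P`, i.e. the probability that there is an
injective poset homomorphism from `P` into the retained elements of `𝒫(n)` (ordered by
inclusion) tends to `0` as `n → ∞`. -/
theorem stmt6 (P : Type) [Fintype P] [PartialOrder P] [Nonempty P]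
    (c : ℝ) (hc : critStar P < c) :
    Filter.Tendsto (fun n : ℕ =>
        cubeProb n (Real.exp (-(c * n)))
          {ω : Finset (Fin n) → Bool | ∃ φ : P → Finset (Fin n),
            Function.Injective φ ∧ Monotone φ ∧ ∀ i, ω (φ i) = true})
      Filter.atTop (nhds 0) := by
  obtain ⟨c', hc', hcc'⟩ := exists_between hc
  have hexp : ∀ n : ℕ, Real.exp (c' * n) * Real.exp (-(c * n)) = Real.exp (-((c - c') * n)) :=
    fun n => by rw [← Real.exp_add]; ring_nf
  have hlim := (tendsto_add_one_pow_mul_exp_neg_mul_atTop_nhds_zero (2 ^ Fintype.card P)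
    (sub_pos.2 hcc')).const_mul (2 ^ Fintype.card P)
  rw [mul_zero] at hlim
  refine squeeze_zero' (Eventually.of_forall fun n => ?_) ?_ hlim
  · have hc0 : 0 ≤ c := critStar_nonneg.trans hc.le
    exact cubeProb_nonneg (Real.exp_pos _).le
      (Real.exp_le_one_iff.2 (neg_nonpos.2 (by positivity))) _
  · filter_upwards [eventually_gt_atTop 0] with n hn
    have hle : Real.exp (-((c - c') * n)) ≤ 1 :=
      Real.exp_le_one_iff.2 (neg_nonpos.2 (mul_nonneg (sub_nonneg.2 hcc'.le) n.cast_nonneg))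
    rw [← hexp] at hle ⊢
    exact cubeProb_exists_copy_le hc' hn (Real.exp_pos _).le hle
end
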